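/- Let E be a real Banach space, U ⊆ E open, k ≥ 1, and X : U → E a vector field of class C^k that is Lipschitz on U. Then for every p₀ ∈ U there exist an open neighborhood U₀ ⊆ U of p₀ and a real number α > 0 such that there is a map 𝔽 : (−α, α) × U₀ → U satisfying: (i) 𝔽(0, x) = x for all x ∈ U₀; (ii) for each x ∈ U₀ the curve t ↦ 𝔽(t,x) is differentiable with ∂ₜ𝔽(t,x) = X(𝔽(t,x)) for all t ∈ (−α, α); (iii) 𝔽 is of class C^k jointly in (t,x); and (iv) any two curves satisfying (i)–(ii) with the same initial point agree on the intersection of their domains. -/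

import Mathlib

open Set Metric Topology Filter

set_option linter.unusedSectionVars false

namespace LocalFlowAux

abbrev I01 := Icc (0 : ℝ) 1

variable {E : Type*} [NormedAddCommGroup E] [NormedSpace ℝ E]

open Classical in
/-- composition operator -/
noncomputable def nem {E F : Type*} [TopologicalSpace E] [TopologicalSpace F] [Zero F] (f : E → F)
    (γ : C(I01, E)) : C(I01, F) :=
  if h : Continuous (fun s => f (γ s)) then ⟨_, h⟩ else 0

def W (U : Set E) : Set C(I01, E) := {γ | ∀ s, γ s ∈ U}

lemma isOpen_W {U : Set E} (hU : IsOpen U) : IsOpen (W U) := by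
  have := ContinuousMap.isOpen_setOfPred_mapsTo (X := I01) (Y := E) isCompact_univ hU
  simpa [W, MapsTo] using this

lemma nem_apply {F : Type*} [TopologicalSpace F] [Zero F] {U : Set E} {f : E → F}
    (hf : ContinuousOn f U) {γ : C(I01, E)} (hγ : γ ∈ W U) (s : I01) :
    nem f γ s = f (γ s) := by
  have : Continuous (fun s => f (γ s)) := hf.comp_continuous γ.continuous hγ
  simp [nem, this]

lemma unif {F : Type*} [NormedAddCommGroup F] {U : Set E} (hU : IsOpen U) {f : E → F}
    (hf : ContinuousOn f U) {γ : C(I01, E)} (hγ : γ ∈ W U) {ε : ℝ} (hε : 0 < ε) :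
    ∃ δ > 0, ∀ s y, dist y (γ s) < δ → y ∈ U ∧ dist (f y) (f (γ s)) < ε := by
  have hK : IsCompact (range γ) := isCompact_range γ.continuous
  have hKU : range γ ⊆ U := by rintro _ ⟨s, rfl⟩; exact hγ s
  obtain ⟨δ₁, h1, h1'⟩ := hK.exists_thickening_subset_open hU hKU
  have := hK.uniformContinuousAt_of_continuousAt f
    (fun x hx => hf.continuousAt (hU.mem_nhds (hKU hx))) (dist_mem_uniformity hε)
  obtain ⟨δ₂, h2, h2'⟩ := Metric.mem_uniformity_dist.1 this
  refine ⟨min δ₁ δ₂, lt_min h1 h2, fun s y hy => ⟨h1' ?_, ?_⟩⟩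
  · exact mem_thickening_iff.2 ⟨γ s, mem_range_self s, hy.trans_le (min_le_left _ _)⟩
  · have := @h2' (γ s) y (by rw [dist_comm]; exact hy.trans_le (min_le_right _ _)) (mem_range_self s)
    rw [dist_comm]; exact this

lemma continuousOn_nem {F : Type*} [NormedAddCommGroup F] {U : Set E} (hU : IsOpen U) {f : E → F}
    (hf : ContinuousOn f U) : ContinuousOn (nem f) (W U) := by
  intro γ hγ
  refine ContinuousAt.continuousWithinAt ?_
  rw [Metric.continuousAt_iff]
  intro ε hε
  obtain ⟨δ, hδ, h⟩ := unif hU hf hγ hε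
  refine ⟨δ, hδ, fun {η} hη => ?_⟩
  have hs : ∀ s, dist (η s) (γ s) < δ := fun s => (ContinuousMap.dist_apply_le_dist s).trans_lt hη
  have hηW : η ∈ W U := fun s => (h s _ (hs s)).1
  rw [ContinuousMap.dist_lt_iff hε]
  intro s
  rw [nem_apply hf hγ, nem_apply hf hηW]
  exact (h s _ (hs s)).2

/-- pointwise application -/
noncomputable def app (E F : Type*) [NormedAddCommGroup E] [NormedSpace ℝ E]
    [NormedAddCommGroup F] [NormedSpace ℝ F] :
    C(I01, E →L[ℝ] F) →L[ℝ] C(I01, E) →L[ℝ] C(I01, F) :=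
  LinearMap.mkContinuous₂
    (LinearMap.mk₂ ℝ (fun (A : C(I01, E →L[ℝ] F)) (h : C(I01, E)) => (⟨fun s => A s (h s), by fun_prop⟩ : C(I01, F)))
      (by intros; ext; simp) (by intros; ext; simp) (by intros; ext; simp) (by intros; ext; simp))
    1 (by
      intro A h
      rw [ContinuousMap.norm_le _ (by positivity)]
      intro s
      rw [one_mul]
      exact (A s).le_of_opNorm_le_of_le (A.norm_coe_le_norm s) (h.norm_coe_le_norm s))

lemma app_apply {F : Type*} [NormedAddCommGroup F] [NormedSpace ℝ F]
    (A : C(I01, E →L[ℝ] F)) (h : C(I01, E)) (s : I01) : app E F A h s = A s (h s) := rfl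

lemma hasFDerivAt_nem {F : Type*} [NormedAddCommGroup F] [NormedSpace ℝ F] {U : Set E}
    (hU : IsOpen U) {f : E → F} (hd : DifferentiableOn ℝ f U) (hf : ContinuousOn (fderiv ℝ f) U)
    {γ : C(I01, E)} (hγ : γ ∈ W U) :
    HasFDerivAt (nem f) (app E F (nem (fderiv ℝ f) γ)) γ := by
  rw [hasFDerivAt_iff_isLittleO, Asymptotics.isLittleO_iff]
  intro ε hε
  obtain ⟨δ, hδ, h⟩ := unif hU hf hγ hε
  filter_upwards [Metric.ball_mem_nhds γ hδ] with η hη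
  have hs : ∀ s, dist (η s) (γ s) < δ := fun s => (ContinuousMap.dist_apply_le_dist s).trans_lt hη
  have hηW : η ∈ W U := fun s => (h s _ (hs s)).1
  rw [ContinuousMap.norm_le _ (by positivity)]
  intro s
  simp only [ContinuousMap.sub_apply, app_apply]
  rw [nem_apply hd.continuousOn hγ, nem_apply hd.continuousOn hηW, nem_apply hf hγ]
  have := (convex_ball (γ s) δ).norm_image_sub_le_of_norm_hasFDerivWithin_le'
    (f := f) (f' := fderiv ℝ f) (φ := fderiv ℝ f (γ s)) (C := ε)
    (fun x hx => ((hd x (h s x hx).1).differentiableAt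
      (hU.mem_nhds (h s x hx).1)).hasFDerivAt.hasFDerivWithinAt)
    (fun x hx => by rw [← dist_eq_norm]; exact (h s x hx).2.le)
    (mem_ball_self hδ) (hs s)
  refine this.trans ?_
  gcongr
  exact (η - γ).norm_coe_le_norm s

lemma contDiffOn_nem.{u} {E : Type u} [NormedAddCommGroup E] [NormedSpace ℝ E]
    {U : Set E} (hU : IsOpen U) (n : ℕ) :
    ∀ (F : Type u) [NormedAddCommGroup F] [NormedSpace ℝ F] (f : E → F),
    ContDiffOn ℝ n f U → ContDiffOn ℝ n (nem f) (W U) := by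
  induction n with
  | zero =>
    intro F _ _ f hf
    exact contDiffOn_zero.2 (continuousOn_nem hU (contDiffOn_zero.1 hf))
  | succ n ih =>
    intro F _ _ f hf
    push_cast at hf ⊢
    rw [contDiffOn_succ_iff_fderiv_of_isOpen hU] at hf
    rw [contDiffOn_succ_iff_fderiv_of_isOpen (isOpen_W hU)]
    have H := fun γ hγ => hasFDerivAt_nem hU hf.1 hf.2.2.continuousOn (γ := γ) hγ
    refine ⟨fun γ hγ => (H γ hγ).differentiableAt.differentiableWithinAt, by simp, ?_⟩
    refine ((app E F).contDiff.comp_contDiffOn (ih _ _ hf.2.2)).congr ?_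
    intro γ hγ
    exact (H γ hγ).fderiv

/-- extension to the line -/
noncomputable def ext (γ : C(I01, E)) (t : ℝ) : E := γ (projIcc 0 1 zero_le_one t)

lemma continuous_ext (γ : C(I01, E)) : Continuous (ext γ) :=
  γ.continuous.comp continuous_projIcc

/-- indefinite integral -/
noncomputable def prim [CompleteSpace E] : C(I01, E) →L[ℝ] C(I01, E) :=
  LinearMap.mkContinuous
    { toFun := fun η => ⟨fun s => ∫ τ in (0:ℝ)..s, ext η τ,
        (intervalIntegral.continuous_primitive
          (fun a b => (continuous_ext η).intervalIntegrable a b) 0).comp continuous_subtype_val⟩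
      map_add' := fun η ζ => by
        ext s
        exact intervalIntegral.integral_add ((continuous_ext η).intervalIntegrable _ _)
          ((continuous_ext ζ).intervalIntegrable _ _)
      map_smul' := fun c η => by
        ext s
        exact intervalIntegral.integral_smul c (ext η) }
    1 (by
      intro η
      rw [ContinuousMap.norm_le _ (by positivity)]
      intro s
      refine (intervalIntegral.norm_integral_le_of_norm_le_const (C := ‖η‖)
        (fun x _ => η.norm_coe_le_norm _)).trans ?_
      rw [sub_zero, abs_of_nonneg s.2.1, mul_comm]
      gcongr
      exact s.2.2)

lemma prim_apply [CompleteSpace E] (η : C(I01, E)) (s : I01) :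
    prim η s = ∫ τ in (0:ℝ)..s, ext η τ := rfl

lemma uniq {U : Set E} {X : E → E} {β : NNReal} (hLip : LipschitzOnWith β X U) (a : ℝ)
    {f g : ℝ → E} (h0 : f 0 = g 0)
    (hf : ∀ s ∈ Icc (0:ℝ) 1, f s ∈ U ∧ HasDerivWithinAt f (a • X (f s)) (Icc 0 1) s)
    (hg : ∀ s ∈ Icc (0:ℝ) 1, g s ∈ U ∧ HasDerivWithinAt g (a • X (g s)) (Icc 0 1) s) :
    f 1 = g 1 := by
  have key : ∀ {f : ℝ → E},
      (∀ s ∈ Icc (0:ℝ) 1, f s ∈ U ∧ HasDerivWithinAt f (a • X (f s)) (Icc 0 1) s) →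
      ∀ t ∈ Ico (0:ℝ) 1, HasDerivWithinAt f (a • X (f t)) (Ici t) t := by
    intro f hf t ht
    exact (hf t (Ico_subset_Icc_self ht)).2.mono_of_mem_nhdsWithin
      (mem_of_superset (Icc_mem_nhdsGE ht.2) (Icc_subset_Icc_left ht.1))
  exact ODE_solution_unique_of_mem_Icc_right (v := fun _ x => a • X x) (s := fun _ => U)
    (K := ‖a‖₊ * β)
    (fun t _ => (lipschitzWith_smul a).comp_lipschitzOnWith hLip)
    (fun s hs => (hf s hs).2.continuousWithinAt) (key hf)
    (fun t ht => (hf t (Ico_subset_Icc_self ht)).1)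
    (fun s hs => (hg s hs).2.continuousWithinAt) (key hg)
    (fun t ht => (hg t (Ico_subset_Icc_self ht)).1) h0 (right_mem_Icc.2 zero_le_one)

lemma implicit [CompleteSpace E] {U : Set E} (hU : IsOpen U) (X : E → E) (k : ℕ) (hk : 1 ≤ k)
    (hXk : ContDiffOn ℝ k X U) (p₀ : E) (hp₀ : p₀ ∈ U) :
    ∃ G : ℝ × E → C(I01, E), ∀ᶠ q in 𝓝 ((0 : ℝ), p₀), ContDiffAt ℝ k G q ∧
      ext (G q) 0 = q.2 ∧
      ∀ s ∈ Icc (0:ℝ) 1, ext (G q) s ∈ U ∧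
        HasDerivWithinAt (ext (G q)) (q.1 • X (ext (G q) s)) (Icc 0 1) s := by
  let c : E →L[ℝ] C(I01, E) := ContinuousLinearMap.const ℝ I01
  let Φ : (ℝ × E) × C(I01, E) → C(I01, E) := fun p => p.2 - c p.1.2 - p.1.1 • prim (nem X p.2)
  let u : (ℝ × E) × C(I01, E) := ((0, p₀), c p₀)
  have huW : u.2 ∈ W U := fun s => hp₀
  have hk0 : (k : WithTop ℕ∞) ≠ 0 := by exact_mod_cast (by omega : k ≠ 0)
  have hnem : ContDiffAt ℝ k (nem X) u.2 :=
    (contDiffOn_nem hU k E X hXk).contDiffAt ((isOpen_W hU).mem_nhds huW)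
  have hΦ : ContDiffAt ℝ k Φ u := by
    have h1 : ContDiffAt ℝ k (fun p : (ℝ × E) × C(I01, E) => nem X p.2) u :=
      hnem.comp u contDiffAt_snd
    have h2 := prim.contDiff.contDiffAt.comp u h1
    have h3 : ContDiffAt ℝ k (fun p : (ℝ × E) × C(I01, E) => c p.1.2) u := by fun_prop
    exact (contDiffAt_snd.sub h3).sub (ContDiffAt.smul (contDiffAt_fst.comp u contDiffAt_fst) h2)
  have hinv : (fderiv ℝ Φ u ∘L .inr ℝ (ℝ × E) C(I01, E)).IsInvertible := by
    have h1 : HasFDerivAt (fun γ => Φ (u.1, γ)) (fderiv ℝ Φ u ∘L .inr ℝ (ℝ × E) C(I01, E)) u.2 :=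
      HasFDerivAt.comp u.2 (hΦ.differentiableAt hk0).hasFDerivAt (hasFDerivAt_prodMk_right u.1 u.2)
    have h2 : HasFDerivAt (fun γ => Φ (u.1, γ)) (.id ℝ C(I01, E)) u.2 := by
      have : (fun γ => Φ (u.1, γ)) = fun γ => γ - c p₀ := by
        funext γ
        simp [Φ, u]
      rw [this]
      exact (hasFDerivAt_id _).sub_const _
    rw [h1.unique h2]
    exact ⟨.refl ℝ _, rfl⟩
  have hu0 : Φ u = 0 := by simp [Φ, u]
  refine ⟨hΦ.implicitFunction hk0 hinv, ?_⟩
  have e1 := hΦ.eventually_apply_implicitFunction hk0 hinv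
  have e2 := hΦ.contDiffAt_implicitFunction hk0 hinv
  have e3 := e2.eventually (by simp)
  have e4 := e2.continuousAt.eventually_mem (by
    rw [hΦ.implicitFunction_apply_self hk0 hinv]; exact (isOpen_W hU).mem_nhds huW)
  filter_upwards [e1, e3, e4] with q h1 h3 h4
  refine ⟨h3, ?_⟩
  generalize hΦ.implicitFunction hk0 hinv q = γ at *
  rw [hu0] at h1
  have key : ∀ s ∈ Icc (0:ℝ) 1, ext γ s = q.2 + q.1 • ∫ τ in (0:ℝ)..s, ext (nem X γ) τ := by
    intro s hs
    have h := congrArg (fun η : C(I01, E) => η ⟨s, hs⟩) h1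
    simp only [Φ, ContinuousMap.sub_apply, ContinuousMap.smul_apply, prim_apply,
      ContinuousMap.zero_apply, sub_sub, sub_eq_zero] at h
    rw [ext, projIcc_of_mem _ hs, h]
    rfl
  refine ⟨?_, fun s hs => ⟨h4 _, ?_⟩⟩
  · rw [key 0 (by simp)]; simp
  · have hd : HasDerivAt (fun s => q.2 + q.1 • ∫ τ in (0:ℝ)..s, ext (nem X γ) τ)
        (q.1 • ext (nem X γ) s) s :=
      (((continuous_ext (nem X γ)).integral_hasStrictDerivAt 0 s).hasDerivAt.const_smul
        q.1).const_add _
    have h5 : ext (nem X γ) s = X (ext γ s) := nem_apply hXk.continuousOn h4 _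
    rw [h5] at hd
    exact hd.hasDerivWithinAt.congr key (key s hs)

end LocalFlowAux

open LocalFlowAux in
theorem local_flow_of_Ck_lipschitz_vector_field
    {E : Type*} [NormedAddCommGroup E] [NormedSpace ℝ E] [CompleteSpace E]
    {U : Set E} (hU : IsOpen U) (X : E → E) (k : ℕ) (hk : 1 ≤ k)
    (hXk : ContDiffOn ℝ k X U) (β : NNReal) (hLip : LipschitzOnWith β X U)
    (p₀ : E) (hp₀ : p₀ ∈ U) :
    ∃ (U₀ : Set E) (α : ℝ) (𝔽 : ℝ → E → E),
      IsOpen U₀ ∧ p₀ ∈ U₀ ∧ U₀ ⊆ U ∧ 0 < α ∧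
      (∀ x ∈ U₀, 𝔽 0 x = x) ∧
      (∀ x ∈ U₀, ∀ t ∈ Set.Ioo (-α) α,
        𝔽 t x ∈ U ∧ HasDerivAt (fun s => 𝔽 s x) (X (𝔽 t x)) t) ∧
      ContDiffOn ℝ k (fun p : ℝ × E => 𝔽 p.1 p.2) (Set.Ioo (-α) α ×ˢ U₀) ∧
      (∀ x ∈ U₀, ∀ J : Set ℝ, Convex ℝ J → (0 : ℝ) ∈ J → ∀ ℓ : ℝ → E,
        ℓ 0 = x → (∀ t ∈ J, ℓ t ∈ U ∧ HasDerivWithinAt ℓ (X (ℓ t)) J t) →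
        ∀ t ∈ J ∩ Set.Ioo (-α) α, ℓ t = 𝔽 t x) := by
  obtain ⟨G, hG⟩ := implicit hU X k hk hXk p₀ hp₀
  have hX1 : ContDiffAt ℝ 1 X p₀ :=
    (hXk.contDiffAt (hU.mem_nhds hp₀)).of_le (by exact_mod_cast hk)
  obtain ⟨ε, hε, a, r, L, K, hr, hpl⟩ := IsPicardLindelof.of_contDiffAt_one hX1
  obtain ⟨φ, hφ, hφc⟩ :=
    (hpl 0).exists_forall_mem_closedBall_eq_hasDerivWithinAt_continuousOn
  have hr' : (0:ℝ) < r := hr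
  have n1 : closedBall p₀ (r:ℝ) ∈ 𝓝 p₀ := closedBall_mem_nhds _ hr'
  have n2 : Ioo (-ε) ε ∈ 𝓝 (0:ℝ) := Ioo_mem_nhds (by linarith) hε
  have hφat : ContinuousAt (fun q : ℝ × E => φ (q.2, q.1)) (0, p₀) := by
    have : ContinuousAt φ (p₀, 0) := hφc.continuousAt
      (prod_mem_nhds n1 (Icc_mem_nhds (by linarith) (by linarith)))
    exact ContinuousAt.comp (f := fun q : ℝ × E => (q.2, q.1)) (x := ((0:ℝ), p₀)) this
      (by fun_prop)
  have e1 : ∀ᶠ q : ℝ × E in 𝓝 (0, p₀), φ (q.2, q.1) ∈ U :=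
    hφat.eventually_mem (by
      show U ∈ 𝓝 (φ (p₀, 0))
      have := (hφ p₀ (mem_closedBall_self hr'.le)).1
      simp only at this
      rw [this]; exact hU.mem_nhds hp₀)
  have e2 : ∀ᶠ q : ℝ × E in 𝓝 (0, p₀), q ∈ Ioo (-ε) ε ×ˢ (closedBall p₀ r ∩ U) :=
    prod_mem_nhds n2 (inter_mem n1 (hU.mem_nhds hp₀))
  obtain ⟨δ, hδ, H⟩ := Metric.eventually_nhds_iff_ball.1 (hG.and (e1.and e2))
  have H' : ∀ t ∈ Ioo (-δ) δ, ∀ x ∈ ball p₀ δ, (t, x) ∈ ball ((0:ℝ), p₀) δ := by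
    intro t ht x hx
    rw [← ball_prod_same]
    exact ⟨by simpa [abs_lt] using ht, hx⟩
  have hz : (0:ℝ) ∈ Ioo (-δ) δ := by simpa using hδ
  have hinit : ∀ x ∈ ball p₀ δ, φ (x, 0) = x := fun x hx =>
    (hφ x (H _ (H' 0 hz x hx)).2.2.2.1).1
  have hder : ∀ x ∈ ball p₀ δ, ∀ t ∈ Ioo (-δ) δ,
      φ (x, t) ∈ U ∧ HasDerivAt (fun s => φ (x, s)) (X (φ (x, t))) t := by
    intro x hx t ht
    obtain ⟨-, h1, h2, h3, -⟩ := H _ (H' t ht x hx)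
    refine ⟨h1, ((hφ x h3).2 t ?_).hasDerivAt (Icc_mem_nhds ?_ ?_)⟩
    · exact ⟨by linarith [h2.1], by linarith [h2.2]⟩
    · linarith [h2.1]
    · linarith [h2.2]
  -- rescaled curves
  have hscale : ∀ x ∈ ball p₀ δ, ∀ t ∈ Ioo (-δ) δ, ∀ s ∈ Icc (0:ℝ) 1,
      φ (x, t * s) ∈ U ∧
      HasDerivWithinAt (fun s => φ (x, t * s)) (t • X (φ (x, t * s))) (Icc 0 1) s := by
    intro x hx t ht s hs
    have hts : t * s ∈ Ioo (-δ) δ := by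
      rw [mem_Ioo, ← abs_lt] at ht ⊢
      rw [abs_mul, abs_of_nonneg hs.1]
      nlinarith [abs_nonneg t, hs.2, hs.1]
    obtain ⟨h1, h2⟩ := hder x hx _ hts
    refine ⟨h1, ?_⟩
    have h3 : HasDerivAt (fun s : ℝ => t * s) t s := by
      simpa using (hasDerivAt_id s).const_mul t
    exact (HasDerivAt.scomp s h2 h3).hasDerivWithinAt
  refine ⟨ball p₀ δ, δ, fun t x => φ (x, t), isOpen_ball, mem_ball_self hδ,
    fun x hx => (H _ (H' 0 hz x hx)).2.2.2.2, hδ, hinit, hder, ?_, ?_⟩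
  · let ev : C(I01, E) →L[ℝ] E := ContinuousMap.evalCLM ℝ (1 : I01)
    have hcd : ContDiffOn ℝ k (fun q : ℝ × E => ev (G q))
        (Ioo (-δ) δ ×ˢ ball p₀ δ) := by
      refine ev.contDiff.comp_contDiffOn ?_
      rintro ⟨t, x⟩ ⟨ht, hx⟩
      exact (H _ (H' t ht x hx)).1.1.contDiffWithinAt
    refine hcd.congr ?_
    rintro ⟨t, x⟩ ⟨ht, hx⟩
    obtain ⟨⟨-, h2, h3⟩, -⟩ := H _ (H' t ht x hx)
    have := uniq hLip t (f := fun s => φ (x, t * s)) (g := ext (G (t, x)))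
      (by simp only [mul_zero]; rw [h2, hinit x hx]) (hscale x hx t ht) h3
    simp only [mul_one] at this
    change φ (x, t) = _
    rw [this, LocalFlowAux.ext, projIcc_right]
    rfl
  · rintro x hx J hJ h0 ℓ hℓ0 hℓ t ⟨htJ, ht⟩
    have hmaps : MapsTo (fun s : ℝ => t * s) (Icc 0 1) J := by
      intro s hs
      have := hJ.smul_mem_of_zero_mem h0 htJ hs
      simpa [mul_comm] using this
    have := uniq hLip t (f := fun s => ℓ (t * s)) (g := fun s => φ (x, t * s))
      (by simp only [mul_zero]; rw [hℓ0, hinit x hx]) (fun s hs => by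
        refine ⟨(hℓ _ (hmaps hs)).1, ?_⟩
        have h3 : HasDerivWithinAt (fun s : ℝ => t * s) t (Icc 0 1) s := by
          simpa using (hasDerivWithinAt_id s (Icc 0 1)).const_mul t
        exact HasDerivWithinAt.scomp s (hℓ _ (hmaps hs)).2 h3 hmaps) (hscale x hx t ht)
    simpa using this
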